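/- Fix n ≥ 2. The structure (ℚ^n, <, <_lex_1,...,<_lex_n), where < is the product order and <_lex_i is the i-th lexicographic order, is not ultrahomogeneous: there exist three-element subsets S, T ⊆ ℚ^n and a bijection f : S → T preserving and reflecting < and each <_lex_i, such that f does not extend to any bijection of ℚ^n preserving and reflecting < and each <_lex_i. -/

import Mathlib

/-- The product (coordinatewise) strict order on `ℚ^n`. -/
def ProdLt {n : ℕ} (a b : Fin n → ℚ) : Prop :=
  (∀ i, a i ≤ b i) ∧ a ≠ b

/-- The `i`-th lexicographic order on `ℚ^n`: coordinates are compared in the cyclic order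
`i, i+1, …, n, 1, …, i-1`, and `a <_lex_i b` iff at the first coordinate in this sequence
where `a` and `b` differ, the coordinate of `a` is smaller. -/
def LexLt {n : ℕ} (i : Fin n) (a b : Fin n → ℚ) : Prop :=
  ∃ k : Fin n, a (i + k) < b (i + k) ∧ ∀ j : Fin n, j < k → a (i + j) = b (i + j)

/-!
The strict inequality `a i < b i` of a single coordinate is definable from the lexicographic orders:
it holds iff some `c` lies `<_lex_i`-between `a` and `b` and `<_lex_(i+1)`-above `b`. Hence
automorphisms preserve it. On the other hand, every `<_lex_i` extends the product order, so any
order isomorphism between two chains of `ℚ^n` preserves the whole structure. It remains to choose a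
chain whose elements all share their first coordinate and map it to a chain on the diagonal.
-/

theorem fin_one_ne_zero {n : ℕ} [n.AtLeastTwo] : (1 : Fin n) ≠ 0 := by
  rw [Fin.ne_iff_vne, Fin.val_one', Fin.val_zero, Nat.mod_eq_of_lt Nat.AtLeastTwo.one_lt]
  exact one_ne_zero

theorem strictMono_comp_right_of_surjective {ι κ α : Type*} [PartialOrder α] {σ : κ → ι}
    (hσ : Function.Surjective σ) : StrictMono fun a : ι → α => a ∘ σ := by
  have hmono : Monotone fun a : ι → α => a ∘ σ := fun _ _ hab k => hab (σ k)
  exact hmono.strictMono_of_injective hσ.injective_comp_right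

section LexicographicOrders

variable {n : ℕ} {a b : Fin n → ℚ} {i : Fin n}

theorem prodLt_iff_lt : ProdLt a b ↔ a < b :=
  (lt_iff_le_and_ne (a := a)).symm

theorem lexLt_iff_toLex_lt :
    LexLt i a b ↔ toLex (a ∘ (i + ·)) < toLex (b ∘ (i + ·)) :=
  exists_congr fun _ => and_comm

theorem LexLt.apply_le (h : LexLt i a b) : a i ≤ b i := by
  have : NeZero n := i.neZero
  obtain ⟨k, hlt, heq⟩ := h
  rcases eq_or_ne k 0 with rfl | hk
  · simpa only [add_zero] using hlt.le
  · simpa only [add_zero] using (heq 0 (Fin.pos_iff_ne_zero.2 hk)).le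

theorem lexLt_of_apply_lt (h : a i < b i) : LexLt i a b :=
  have : NeZero n := i.neZero
  ⟨0, by simpa only [add_zero] using h, fun j hj => absurd hj (Fin.not_lt_zero j)⟩

theorem LexLt.asymm (hab : LexLt i a b) : ¬ LexLt i b a := by
  rw [lexLt_iff_toLex_lt] at hab ⊢
  exact hab.asymm

-- Passing from `<_lex_i` to `<_lex_(i+1)` moves coordinate `i` from the first to the last place.
theorem LexLt.add_one_of_apply_eq [NeZero n] (h : LexLt i a b) (hi : a i = b i) :
    LexLt (i + 1) a b := by
  obtain ⟨k, hlt, heq⟩ := h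
  have hk : k ≠ 0 := by
    rintro rfl
    rw [add_zero] at hlt
    exact hlt.ne hi
  have one_add_lt {j : Fin n} (hj : j < k - 1) : 1 + j < k := by
    rw [Fin.lt_def, Fin.val_sub_one_of_ne_zero hk] at hj
    rw [Fin.lt_def, add_comm, Fin.val_add_one_of_lt' (by omega)]
    omega
  refine ⟨k - 1, by rwa [add_assoc, add_sub_cancel], fun j hj => ?_⟩
  rw [add_assoc]
  exact heq (1 + j) (one_add_lt hj)

theorem apply_lt_iff_exists_lexLt_between [n.AtLeastTwo] :
    a i < b i ↔ ∃ c, LexLt i a c ∧ LexLt i c b ∧ LexLt (i + 1) b c := by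
  constructor
  · intro hab
    obtain ⟨q, haq, hqb⟩ := exists_between hab
    have hi : i + 1 ≠ i := add_ne_left.2 fin_one_ne_zero
    refine ⟨Function.update (b + 1) i q, lexLt_of_apply_lt ?_, lexLt_of_apply_lt ?_,
      lexLt_of_apply_lt ?_⟩
    · rwa [Function.update_self]
    · rwa [Function.update_self]
    · rw [Function.update_of_ne hi]
      exact lt_add_one _
  · rintro ⟨c, hac, hcb, hbc⟩
    refine hac.apply_le.trans_lt (lt_of_le_of_ne hcb.apply_le fun hi => ?_)
    exact hbc.asymm (hcb.add_one_of_apply_eq hi)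

theorem apply_lt_iff_of_surjective_of_lexLt_iff [n.AtLeastTwo] {g : (Fin n → ℚ) → Fin n → ℚ}
    (hg : Function.Surjective g) (hlex : ∀ i a b, LexLt i a b ↔ LexLt i (g a) (g b)) :
    a i < b i ↔ g a i < g b i :=
  calc
    a i < b i ↔ ∃ c, LexLt i a c ∧ LexLt i c b ∧ LexLt (i + 1) b c :=
      apply_lt_iff_exists_lexLt_between
    _ ↔ ∃ c, LexLt i (g a) (g c) ∧ LexLt i (g c) (g b) ∧ LexLt (i + 1) (g b) (g c) := by
      simp only [← hlex]
    _ ↔ ∃ c, LexLt i (g a) c ∧ LexLt i c (g b) ∧ LexLt (i + 1) (g b) c :=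
      (hg.exists (p := fun c => LexLt i (g a) c ∧ LexLt i c (g b) ∧ LexLt (i + 1) (g b) c)).symm
    _ ↔ g a i < g b i := apply_lt_iff_exists_lexLt_between.symm

end LexicographicOrders

section Chains

variable {n : ℕ} {ι : Type*} [LinearOrder ι] {u : ι → Fin n → ℚ} {p q : ι}

theorem prodLt_iff_lt_of_strictMono (hu : StrictMono u) : ProdLt (u p) (u q) ↔ p < q :=
  prodLt_iff_lt.trans hu.lt_iff_lt

theorem lexLt_iff_lt_of_strictMono (hu : StrictMono u) (i : Fin n) :
    LexLt i (u p) (u q) ↔ p < q :=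
  have : NeZero n := i.neZero
  have hcomp : StrictMono fun a : Fin n → ℚ => a ∘ (i + ·) :=
    strictMono_comp_right_of_surjective (add_left_surjective i)
  lexLt_iff_toLex_lt.trans (Pi.toLex_strictMono.comp (hcomp.comp hu)).lt_iff_lt

theorem prodLt_iff_and_lexLt_iff_of_strictMono {v : ι → Fin n → ℚ} (hu : StrictMono u)
    (hv : StrictMono v) :
    (ProdLt (u p) (u q) ↔ ProdLt (v p) (v q)) ∧
      ∀ i, LexLt i (u p) (u q) ↔ LexLt i (v p) (v q) :=
  ⟨(prodLt_iff_lt_of_strictMono hu).trans (prodLt_iff_lt_of_strictMono hv).symm, fun i =>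
    (lexLt_iff_lt_of_strictMono hu i).trans (lexLt_iff_lt_of_strictMono hv i).symm⟩

end Chains

section HyperplaneDiagonal

variable (n : ℕ)

/-- The diagonal of the coordinate hyperplane `x 0 = 0`, parametrised by `q ↦ (0, q, …, q)`: a chain
whose elements all share their first coordinate. -/
def hyperplaneDiagonal [NeZero n] (q : ℚ) : Fin n → ℚ :=
  Function.update (Function.const _ q) 0 0

theorem hyperplaneDiagonal_zero [NeZero n] (q : ℚ) : hyperplaneDiagonal n q 0 = 0 :=
  Function.update_self ..

theorem hyperplaneDiagonal_one [n.AtLeastTwo] (q : ℚ) : hyperplaneDiagonal n q 1 = q :=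
  Function.update_of_ne fin_one_ne_zero ..

theorem strictMono_hyperplaneDiagonal [n.AtLeastTwo] : StrictMono (hyperplaneDiagonal n) := by
  intro p q hpq
  refine Pi.lt_def.2 ⟨update_le_update_iff.2 ⟨le_rfl, fun _ _ => hpq.le⟩, 1, ?_⟩
  rwa [hyperplaneDiagonal_one, hyperplaneDiagonal_one]

end HyperplaneDiagonal

/-- `(ℚ^n, <, <_lex_1, …, <_lex_n)` is not ultrahomogeneous. -/
theorem stmt_7 (n : ℕ) (hn : 2 ≤ n) :
    ∃ S T : Set (Fin n → ℚ), S.ncard = 3 ∧ T.ncard = 3 ∧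
      ∃ f : (Fin n → ℚ) → (Fin n → ℚ), Set.BijOn f S T ∧
        (∀ a ∈ S, ∀ b ∈ S,
          (ProdLt a b ↔ ProdLt (f a) (f b)) ∧
          ∀ i : Fin n, LexLt i a b ↔ LexLt i (f a) (f b)) ∧
        ¬ ∃ g : (Fin n → ℚ) → (Fin n → ℚ), Function.Bijective g ∧
            (∀ a b : Fin n → ℚ,
              (ProdLt a b ↔ ProdLt (g a) (g b)) ∧
              ∀ i : Fin n, LexLt i a b ↔ LexLt i (g a) (g b)) ∧
            ∀ a ∈ S, g a = f a := by
  have : n.AtLeastTwo := ⟨hn⟩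
  let A : Set ℚ := {0, 1, 2}
  have hA : A.ncard = 3 :=
    Set.ncard_eq_three.2 ⟨0, 1, 2, by norm_num, by norm_num, by norm_num, rfl⟩
  let s : ℚ → Fin n → ℚ := hyperplaneDiagonal n
  let t : ℚ → Fin n → ℚ := Function.const (Fin n)
  have hs : StrictMono s := strictMono_hyperplaneDiagonal n
  have ht : StrictMono t := Function.const_strictMono
  let f : (Fin n → ℚ) → Fin n → ℚ := fun a => t (a 1)
  have hf : f ∘ s = t := funext fun q => congrArg t (hyperplaneDiagonal_one n q)
  refine ⟨s '' A, t '' A, ?_, ?_, f, ?_, ?_, ?_⟩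
  · rw [Set.ncard_image_of_injective A hs.injective, hA]
  · rw [Set.ncard_image_of_injective A ht.injective, hA]
  · rw [← Set.bijOn_comp_iff hs.injective.injOn, hf]
    exact ht.injective.injOn.bijOn_image
  · rintro _ ⟨p, -, rfl⟩ _ ⟨q, -, rfl⟩
    exact prodLt_iff_and_lexLt_iff_of_strictMono hs (hf ▸ ht : StrictMono (f ∘ s))
  · rintro ⟨g, hg, hpres, hext⟩
    have hgs (q : ℚ) (hq : q ∈ A) : g (s q) = t q :=
      (hext (s q) (Set.mem_image_of_mem s hq)).trans (congrFun hf q)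
    have hlt : g (s 0) 0 < g (s 1) 0 := by
      rw [hgs 0 (by simp [A]), hgs 1 (by simp [A])]
      exact zero_lt_one
    rw [← apply_lt_iff_of_surjective_of_lexLt_iff hg.surjective fun i a b => (hpres a b).2 i] at hlt
    exact hlt.ne ((hyperplaneDiagonal_zero n 0).trans (hyperplaneDiagonal_zero n 1).symm)
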